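/- arXiv:2512.12946 — 6 statements merged into one kernel-verified Lean document; each statement's English description precedes it below -/
import Mathlib

section
/- Let (g_t)_{t≥1} be a sequence in ℝ^d whose Cesàro means A_k converge to some limit L ∈ ℝ^d. Then max_{1≤k≤n} (k/n)‖A_k − A_n‖ → 0 as n → ∞. -/
/-! A convergent sequence is bounded, say `‖A k - L‖ ≤ C`, and `‖A k - L‖ < ε / 4` for `k ≥ N`.
If `n ≥ N` is large enough that `N * (2 * C) / n < ε / 2`, then every `k ≤ n` satisfies
`(k / n) * ‖A k - A n‖ ≤ ε / 2`: for `k < N` because the weight `k / n` is small and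
`‖A k - A n‖ ≤ 2 * C`, for `k ≥ N` because the weight is at most `1` and `‖A k - A n‖ < ε / 2`. -/

open Filter

/-- Let `(g_t)_{t≥1}` be a sequence in a real normed space (e.g. `ℝ^d`) whose Cesàro means
`A_k = (1/k) ∑_{t=1}^k g_t` converge to some limit `L`. Then
`max_{1≤k≤n} (k/n) ‖A_k − A_n‖ → 0` as `n → ∞`. -/
theorem cesaro_max_self_centered_tendsto_zero
    {E : Type*} [NormedAddCommGroup E] [NormedSpace ℝ E]
    (g : ℕ → E) (L : E) (A : ℕ → E)
    (hA : ∀ k : ℕ, A k = ((k : ℝ)⁻¹) • ∑ t ∈ Finset.Icc 1 k, g t)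
    (hlim : Tendsto A atTop (nhds L)) :
    Tendsto (fun n : ℕ =>
        ⨆ k : Finset.Icc 1 n, ((k : ℕ) : ℝ) / (n : ℝ) * ‖A (k : ℕ) - A n‖)
      atTop (nhds 0) := by
  obtain ⟨C, hC⟩ : ∃ C, ∀ k, ‖A k - L‖ ≤ C := by
    obtain ⟨C, hC⟩ := (hlim.sub_const L).norm.bddAbove_range
    exact ⟨C, fun k => hC ⟨k, rfl⟩⟩
  rw [Metric.tendsto_atTop]
  intro ε hε
  obtain ⟨N, hN⟩ := Metric.tendsto_atTop.1 hlim (ε / 4) (by positivity)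
  have hsmall : ∀ᶠ n : ℕ in atTop, (N : ℝ) * (2 * C) / n < ε / 2 :=
    (tendsto_const_div_atTop_nhds_zero_nat ((N : ℝ) * (2 * C))).eventually_lt_const (by positivity)
  obtain ⟨M, hM⟩ := eventually_atTop.1 hsmall
  refine ⟨max M (max N 1), fun n hn => ?_⟩
  have hnM : M ≤ n := by omega
  have hnN : N ≤ n := by omega
  have hn0 : (0 : ℝ) < n := by
    have : 0 < n := by omega
    exact_mod_cast this
  have hnn := hM n hnM
  have htri : ∀ k, ‖A k - A n‖ ≤ ‖A k - L‖ + ‖A n - L‖ := fun k => by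
    simpa [dist_eq_norm] using dist_triangle_right (A k) (A n) L
  have hle : (⨆ k : Finset.Icc 1 n, ((k : ℕ) : ℝ) / (n : ℝ) * ‖A (k : ℕ) - A n‖) ≤ ε / 2 := by
    refine Real.iSup_le (fun ⟨k, hk⟩ => ?_) (by positivity)
    have hkn : k ≤ n := (Finset.mem_Icc.1 hk).2
    change (k : ℝ) / n * ‖A k - A n‖ ≤ ε / 2
    have ht := htri k
    rcases lt_or_ge k N with hkN | hkN
    · calc (k : ℝ) / n * ‖A k - A n‖ ≤ (N : ℝ) / n * (2 * C) := by
            gcongr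
            linarith [hC k, hC n]
        _ = (N : ℝ) * (2 * C) / n := by ring
        _ ≤ ε / 2 := hnn.le
    · have h1 := hN k hkN
      have h2 := hN n hnN
      rw [dist_eq_norm] at h1 h2
      have hw : (k : ℝ) / n ≤ 1 := (div_le_one hn0).2 (by exact_mod_cast hkn)
      calc (k : ℝ) / n * ‖A k - A n‖ ≤ 1 * ‖A k - A n‖ := by gcongr
        _ ≤ ε / 2 := by linarith
  have hnonneg : 0 ≤ ⨆ k : Finset.Icc 1 n, ((k : ℕ) : ℝ) / (n : ℝ) * ‖A (k : ℕ) - A n‖ :=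
    Real.iSup_nonneg fun _ => by positivity
  rw [Real.dist_eq, sub_zero, abs_of_nonneg hnonneg]
  linarith
end

section
/- Let (g_t)_{t≥1} be a sequence in ℝ^d whose Cesàro means A_k converge to some limit L ∈ ℝ^d. Then (1/n³) · max_{1≤k≤n} ∑_{t=1}^k t²‖A_t − A_k‖² → 0 as n → ∞. -/
open Filter

/-!
With `b t = ‖A t - L‖ → 0`, the inequality `‖A t - A k‖² ≤ 2 (b t)² + 2 (b k)²` and `t ≤ k` give
`k⁻³ ∑_{t ≤ k} t² ‖A t - A k‖² ≤ 2 · (1/k) ∑_{t ≤ k} (b t)² + 2 (b k)²`, which tends to `0` because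
Cesàro means preserve limits (`tendsto_sum_div_cube`). Passing to the running maximum is harmless:
a nonnegative sequence that is `o(k³)` is bounded by `C + ε k³` for every `ε > 0`, so its maximum
over `k ≤ n` is at most `C + ε n³` (`tendsto_iSup_div_cube`).
-/

/-- If a nonnegative sequence is `o(k³)`, then so is its running maximum. -/
lemma tendsto_iSup_div_cube (S : ℕ → ℝ) (hS0 : ∀ k, 0 ≤ S k)
    (hS : Tendsto (fun k : ℕ => S k / (k : ℝ) ^ 3) atTop (nhds 0)) :
    Tendsto (fun n : ℕ => (1 / (n : ℝ) ^ 3) * ⨆ k : Finset.Icc 1 n, S (k : ℕ))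
      atTop (nhds 0) := by
  have hsup0 : ∀ n : ℕ, 0 ≤ ⨆ k : Finset.Icc 1 n, S (k : ℕ) :=
    fun n => Real.iSup_nonneg fun k => hS0 _
  rw [Metric.tendsto_atTop]
  intro ε hε
  obtain ⟨N, hN⟩ := (Metric.tendsto_atTop.1 hS) (ε / 2) (half_pos hε)
  set C : ℝ := ∑ j ∈ Finset.range N, S j with hC
  have hC0 : 0 ≤ C := Finset.sum_nonneg fun j _ => hS0 j
  have hbound : ∀ k : ℕ, 1 ≤ k → S k ≤ C + ε / 2 * (k : ℝ) ^ 3 := by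
    intro k hk
    have hk3 : (0 : ℝ) < (k : ℝ) ^ 3 := by positivity
    rcases lt_or_ge k N with h | h
    · have := Finset.single_le_sum (f := S) (fun j _ => hS0 j) (Finset.mem_range.2 h)
      nlinarith
    · have h1 := hN k h
      rw [Real.dist_eq, sub_zero] at h1
      have h2 := (div_lt_iff₀ hk3).1 (lt_of_abs_lt h1)
      linarith
  have hCn : Tendsto (fun n : ℕ => C / (n : ℝ) ^ 3) atTop (nhds 0) :=
    Tendsto.const_div_atTop
      ((tendsto_pow_atTop (by norm_num)).comp tendsto_natCast_atTop_atTop) C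
  obtain ⟨M, hM⟩ := (Metric.tendsto_atTop.1 hCn) (ε / 2) (half_pos hε)
  refine ⟨max M 1, fun n hn => ?_⟩
  have hn1 : 1 ≤ n := le_trans (le_max_right _ _) hn
  have hn3 : (0 : ℝ) < (n : ℝ) ^ 3 := by positivity
  have h1 := hM n (le_trans (le_max_left _ _) hn)
  rw [Real.dist_eq, sub_zero] at h1
  have h2 := (div_lt_iff₀ hn3).1 (lt_of_abs_lt h1)
  have h3 : ⨆ k : Finset.Icc 1 n, S (k : ℕ) ≤ C + ε / 2 * (n : ℝ) ^ 3 := by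
    refine Real.iSup_le (fun k => ?_) (by positivity)
    obtain ⟨hk1, hkn⟩ := Finset.mem_Icc.1 k.2
    have hkn' : ((k : ℕ) : ℝ) ≤ n := by exact_mod_cast hkn
    refine (hbound k hk1).trans ?_
    gcongr
  rw [Real.dist_eq, sub_zero, abs_of_nonneg (mul_nonneg (by positivity) (hsup0 n)),
    one_div_mul_eq_div, div_lt_iff₀ hn3]
  linarith

/-- The single-index version: no maximum is taken, and the normalisation is `k³`. -/
lemma tendsto_sum_div_cube {E : Type*} [NormedAddCommGroup E] (A : ℕ → E) (L : E)
    (hlim : Tendsto A atTop (nhds L)) :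
    Tendsto (fun k : ℕ =>
      (∑ t ∈ Finset.Icc 1 k, (t : ℝ) ^ 2 * ‖A t - A k‖ ^ 2) / (k : ℝ) ^ 3) atTop (nhds 0) := by
  have hb : Tendsto (fun t => ‖A t - L‖ ^ 2) atTop (nhds 0) := by
    simpa using (tendsto_iff_norm_sub_tendsto_zero.1 hlim).pow 2
  have hces := (hb.comp (tendsto_add_atTop_nat 1)).cesaro
  have hup : Tendsto (fun k : ℕ => 2 * ((k : ℝ)⁻¹ * ∑ i ∈ Finset.range k, ‖A (i + 1) - L‖ ^ 2)
      + 2 * ‖A k - L‖ ^ 2) atTop (nhds 0) := by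
    simpa using (hces.const_mul 2).add (hb.const_mul 2)
  refine tendsto_of_tendsto_of_tendsto_of_le_of_le' tendsto_const_nhds hup
    (Eventually.of_forall fun k => by positivity) ?_
  filter_upwards [eventually_ge_atTop 1] with k hk
  have hk0 : (0 : ℝ) < k := by exact_mod_cast hk
  have hshift : ∑ i ∈ Finset.range k, ‖A (i + 1) - L‖ ^ 2
      = ∑ t ∈ Finset.Icc 1 k, ‖A t - L‖ ^ 2 := by
    rw [Finset.range_eq_Ico, Finset.sum_Ico_add' (fun t => ‖A t - L‖ ^ 2) 0 k 1]
    rfl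
  have hterm : ∀ t ∈ Finset.Icc 1 k, (t : ℝ) ^ 2 * ‖A t - A k‖ ^ 2
      ≤ (k : ℝ) ^ 2 * (2 * ‖A t - L‖ ^ 2 + 2 * ‖A k - L‖ ^ 2) := by
    intro t ht
    have htk : (t : ℝ) ≤ k := by exact_mod_cast (Finset.mem_Icc.1 ht).2
    have htri : ‖A t - A k‖ ≤ ‖A t - L‖ + ‖A k - L‖ := by
      simpa [dist_eq_norm] using dist_triangle_right (A t) (A k) L
    have hsq : ‖A t - A k‖ ^ 2 ≤ 2 * ‖A t - L‖ ^ 2 + 2 * ‖A k - L‖ ^ 2 := by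
      nlinarith [pow_le_pow_left₀ (norm_nonneg _) htri 2, sq_nonneg (‖A t - L‖ - ‖A k - L‖)]
    gcongr
  rw [div_le_iff₀ (by positivity), hshift]
  refine (Finset.sum_le_sum hterm).trans (le_of_eq ?_)
  rw [← Finset.mul_sum, Finset.sum_add_distrib, ← Finset.mul_sum, Finset.sum_const,
    Nat.card_Icc, nsmul_eq_mul, Nat.add_sub_cancel]
  field_simp

/-- Let `(g_t)_{t≥1}` be a sequence in a real normed space (e.g. `ℝ^d`) whose Cesàro means
`A_k = (1/k) ∑_{t=1}^k g_t` converge to some limit `L`. Then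
`(1/n³) · max_{1≤k≤n} ∑_{t=1}^k t² ‖A_t − A_k‖² → 0` as `n → ∞`. -/
theorem cesaro_cubic_max_tendsto_zero
    {E : Type*} [NormedAddCommGroup E] [NormedSpace ℝ E]
    (g : ℕ → E) (L : E) (A : ℕ → E)
    (hA : ∀ k : ℕ, A k = ((k : ℝ)⁻¹) • ∑ t ∈ Finset.Icc 1 k, g t)
    (hlim : Tendsto A atTop (nhds L)) :
    Tendsto (fun n : ℕ =>
        (1 / (n : ℝ) ^ 3) *
          ⨆ k : Finset.Icc 1 n,
            ∑ t ∈ Finset.Icc 1 (k : ℕ), (t : ℝ) ^ 2 * ‖A t - A (k : ℕ)‖ ^ 2)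
      atTop (nhds 0) := by
  exact tendsto_iSup_div_cube (fun k => ∑ t ∈ Finset.Icc 1 k, (t : ℝ) ^ 2 * ‖A t - A k‖ ^ 2)
    (fun k => by positivity) (tendsto_sum_div_cube A L hlim)
end

section
/- Let M > 0 and let (a_t)_{t≥1} and (ã_t)_{t≥1} be real sequences with values in [0,M], with partial sums S_t = ∑_{j=1}^t a_j and S̃_t = ∑_{j=1}^t ã_j. Then for every n ≥ 1, (1/n³) · max_{1≤k≤n} ∑_{t=1}^k |(S̃_t − (t/k)S̃_k)² − (S_t − (t/k)S_k)²| ≤ (4M/n) ∑_{j=1}^n |ã_j − a_j|. -/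
/-!
Write `x`, `y` for the bridges `S̃_t − (t/k) S̃_k` and `S_t − (t/k) S_k`, and put
`D = ∑_{j ≤ n} |ã_j − a_j|`. The proof factors `|x² − y²| = |x − y| · |x + y|`.
Every partial sum up to `n` of `ã` differs from that of `a` by at most `D`, so `|x − y| ≤ 2D`.
Each bridge is a difference of two numbers of `[0, nM]`, so `|x + y| ≤ 2nM`.
Hence each summand is at most `4nMD`, and each of the at most `n` sums over `t` is at most
`4n²MD`.
-/

/-- Comparison of two squared bridges, with `s, s'` in the role of the partial sums at `t`,
`u, u'` of those at `k`, and `r` of the ratio `t / k`. -/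
lemma abs_bridge_sq_sub_le {s s' u u' r B D : ℝ} (hr0 : 0 ≤ r) (hr1 : r ≤ 1)
    (hs : s ∈ Set.Icc 0 B) (hs' : s' ∈ Set.Icc 0 B)
    (hu : u ∈ Set.Icc 0 B) (hu' : u' ∈ Set.Icc 0 B)
    (hsD : |s' - s| ≤ D) (huD : |u' - u| ≤ D) :
    |(s' - r * u') ^ 2 - (s - r * u) ^ 2| ≤ 2 * D * (2 * B) := by
  obtain ⟨hs0, hsB⟩ := hs
  obtain ⟨hs0', hsB'⟩ := hs'
  obtain ⟨hu0, huB⟩ := hu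
  obtain ⟨hu0', huB'⟩ := hu'
  have hD : 0 ≤ D := (abs_nonneg _).trans hsD
  have hru0 : 0 ≤ r * u := mul_nonneg hr0 hu0
  have hru0' : 0 ≤ r * u' := mul_nonneg hr0 hu0'
  have hru : r * u ≤ u := mul_le_of_le_one_left hu0 hr1
  have hru' : r * u' ≤ u' := mul_le_of_le_one_left hu0' hr1
  have hrD : |r * (u' - u)| ≤ D := by
    rw [abs_mul, abs_of_nonneg hr0]
    exact (mul_le_of_le_one_left (abs_nonneg _) hr1).trans huD
  have hdiff : |(s' - s) - r * (u' - u)| ≤ 2 * D := (abs_sub _ _).trans (by linarith)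
  have hsum : |(s' - r * u') + (s - r * u)| ≤ 2 * B := by
    rw [abs_le]
    constructor <;> linarith
  calc |(s' - r * u') ^ 2 - (s - r * u) ^ 2|
      = |(s' - s) - r * (u' - u)| * |(s' - r * u') + (s - r * u)| := by
        rw [← abs_mul]
        congr 1
        ring
    _ ≤ 2 * D * (2 * B) := mul_le_mul hdiff hsum (abs_nonneg _) (by linarith)

lemma sum_Icc_mem_Icc {M : ℝ} (hM : 0 ≤ M) {a : ℕ → ℝ} (ha : ∀ t, a t ∈ Set.Icc 0 M)
    {t n : ℕ} (htn : t ≤ n) : ∑ j ∈ Finset.Icc 1 t, a j ∈ Set.Icc 0 ((n : ℝ) * M) := by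
  refine ⟨Finset.sum_nonneg fun j _ => (ha j).1, ?_⟩
  calc ∑ j ∈ Finset.Icc 1 t, a j ≤ ∑ j ∈ Finset.Icc 1 t, M :=
        Finset.sum_le_sum fun j _ => (ha j).2
    _ = (t : ℝ) * M := by simp
    _ ≤ (n : ℝ) * M := by gcongr

lemma abs_sum_Icc_sub_le (a b : ℕ → ℝ) {t n : ℕ} (htn : t ≤ n) :
    |∑ j ∈ Finset.Icc 1 t, b j - ∑ j ∈ Finset.Icc 1 t, a j|
      ≤ ∑ j ∈ Finset.Icc 1 n, |b j - a j| := by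
  rw [← Finset.sum_sub_distrib]
  exact (Finset.abs_sum_le_sum_abs _ _).trans
    (Finset.sum_le_sum_of_subset_of_nonneg (Finset.Icc_subset_Icc_right htn)
      fun _ _ _ => abs_nonneg _)

/-- Let `M > 0` and let `(a_t)_{t≥1}` and `(ã_t)_{t≥1}` be real sequences with values in
`[0,M]`, with partial sums `S_t = ∑_{j=1}^t a_j` and `S̃_t = ∑_{j=1}^t ã_j`. Then for every
`n ≥ 1`,
`(1/n³) · max_{1≤k≤n} ∑_{t=1}^k |(S̃_t − (t/k)S̃_k)² − (S_t − (t/k)S_k)²|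
  ≤ (4M/n) ∑_{j=1}^n |ã_j − a_j|`. -/
theorem cusum_square_compare (M : ℝ) (hM : 0 < M) (a atil : ℕ → ℝ)
    (ha : ∀ t : ℕ, a t ∈ Set.Icc 0 M) (hatil : ∀ t : ℕ, atil t ∈ Set.Icc 0 M)
    (S Stil : ℕ → ℝ)
    (hS : ∀ t : ℕ, S t = ∑ j ∈ Finset.Icc 1 t, a j)
    (hStil : ∀ t : ℕ, Stil t = ∑ j ∈ Finset.Icc 1 t, atil j)
    (n : ℕ) (hn : 1 ≤ n) :
    (1 / (n : ℝ) ^ 3) *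
        (⨆ k : Finset.Icc 1 n,
          ∑ t ∈ Finset.Icc 1 (k : ℕ),
            |(Stil t - (t : ℝ) / ((k : ℕ) : ℝ) * Stil (k : ℕ)) ^ 2 -
              (S t - (t : ℝ) / ((k : ℕ) : ℝ) * S (k : ℕ)) ^ 2|)
      ≤ (4 * M / (n : ℝ)) * ∑ j ∈ Finset.Icc 1 n, |atil j - a j| := by
  have hn0 : (0 : ℝ) < n := by exact_mod_cast hn
  set D := ∑ j ∈ Finset.Icc 1 n, |atil j - a j| with hD
  have hD0 : 0 ≤ D := Finset.sum_nonneg fun _ _ => abs_nonneg _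
  have : Nonempty (Finset.Icc 1 n) := ⟨⟨1, Finset.mem_Icc.2 ⟨le_rfl, hn⟩⟩⟩
  have hsup : (⨆ k : Finset.Icc 1 n,
          ∑ t ∈ Finset.Icc 1 (k : ℕ),
            |(Stil t - (t : ℝ) / ((k : ℕ) : ℝ) * Stil (k : ℕ)) ^ 2 -
              (S t - (t : ℝ) / ((k : ℕ) : ℝ) * S (k : ℕ)) ^ 2|)
      ≤ (n : ℝ) * (2 * D * (2 * (n * M))) := by
    refine ciSup_le ?_
    rintro ⟨k, hk⟩
    have hkn : k ≤ n := (Finset.mem_Icc.1 hk).2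
    calc _ ≤ ∑ t ∈ Finset.Icc 1 k, 2 * D * (2 * (n * M)) := by
          refine Finset.sum_le_sum fun t ht => ?_
          have htk : t ≤ k := (Finset.mem_Icc.1 ht).2
          have htn : t ≤ n := htk.trans hkn
          simp only [hS, hStil]
          exact abs_bridge_sq_sub_le (by positivity)
            (div_le_one_of_le₀ (by exact_mod_cast htk) (by positivity))
            (sum_Icc_mem_Icc hM.le ha htn) (sum_Icc_mem_Icc hM.le hatil htn)
            (sum_Icc_mem_Icc hM.le ha hkn) (sum_Icc_mem_Icc hM.le hatil hkn)
            (abs_sum_Icc_sub_le a atil htn) (abs_sum_Icc_sub_le a atil hkn)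
      _ = (k : ℝ) * (2 * D * (2 * (n * M))) := by simp
      _ ≤ (n : ℝ) * (2 * D * (2 * (n * M))) := by gcongr
  calc _ ≤ (1 / (n : ℝ) ^ 3) * ((n : ℝ) * (2 * D * (2 * (n * M)))) := by gcongr
    _ = (4 * M / (n : ℝ)) * D := by
        field_simp
        ring
end

section
/- Under the two-regime setup, sup_{0≤s≤1} |(1/n)·D_n(⌊ns⌋) − T(s)| → 0 as n → ∞. -/
/-!
Write `A m` for the `m`-th partial sum of `a`. Convergence of the Cesàro means makes `A m - m μa`
at most `ε n` uniformly in `m ≤ n` once `n` is large (`cesaro_uniform`): the finitely many small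
`m` contribute a bounded error, negligible against `n`. The same holds for `b`. Since the partial
sum of `x n` up to `k` is `A (min k κ) + B k - B (min k κ)` with `κ = ⌊nλ⌋`
(`sum_two_regime`), `D n k / n` is within `6 ε` of `C (min u v - u v)`, where `u = k / n` and
`v = κ / n`. The tent function is `T s = C (min s λ - s λ)`, and replacing `(u, v)` by `(s, λ)`
costs at most `3 C / n` (`tent_lipschitz`), because rounding moves each argument by at most `1 / n`.
-/

open Filter


/-- A sequence with convergent Cesàro means has partial sums that are linear up to `ε n`,
uniformly over all indices `m ≤ n`. -/
lemma cesaro_uniform (a : ℕ → ℝ) (μ : ℝ)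
    (h : Tendsto (fun m : ℕ => (1 / (m : ℝ)) * ∑ t ∈ Finset.Icc 1 m, a t) atTop (nhds μ))
    (ε : ℝ) (hε : 0 < ε) :
    ∀ᶠ n : ℕ in atTop, ∀ m ≤ n, |(∑ t ∈ Finset.Icc 1 m, a t) - m * μ| ≤ ε * n := by
  obtain ⟨N, hN⟩ := Metric.tendsto_atTop.1 h ε hε
  -- `K` bounds the error for the finitely many `m < N`.
  set K : ℝ := ∑ m ∈ Finset.range N, |(∑ t ∈ Finset.Icc 1 m, a t) - m * μ| with hK
  obtain ⟨n₀, hn₀⟩ := exists_nat_ge (K / ε)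
  filter_upwards [eventually_ge_atTop n₀] with n hn m hmn
  have hn' : (n₀ : ℝ) ≤ n := by exact_mod_cast hn
  by_cases hm : m < N
  · have h1 : |(∑ t ∈ Finset.Icc 1 m, a t) - m * μ| ≤ K :=
      Finset.single_le_sum (f := fun m : ℕ => |(∑ t ∈ Finset.Icc 1 m, a t) - m * μ|)
        (fun i _ => abs_nonneg _) (Finset.mem_range.2 hm)
    have h2 : K ≤ n * ε := (div_le_iff₀ hε).1 (hn₀.trans hn')
    linarith
  · rcases Nat.eq_zero_or_pos m with rfl | hm0
    · simp; positivity
    · have h1 := (hN m (not_lt.1 hm)).le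
      rw [Real.dist_eq] at h1
      have hmp : (0 : ℝ) < m := by exact_mod_cast hm0
      have hmn' : (m : ℝ) ≤ n := by exact_mod_cast hmn
      have h2 : (∑ t ∈ Finset.Icc 1 m, a t) - m * μ
          = m * ((1 / (m : ℝ)) * ∑ t ∈ Finset.Icc 1 m, a t - μ) := by
        field_simp
      rw [h2, abs_mul, abs_of_pos hmp]
      calc _ ≤ (m : ℝ) * ε := by gcongr
        _ ≤ n * ε := by gcongr
        _ = ε * n := mul_comm _ _

lemma sum_two_regime (a b : ℕ → ℝ) (κ k : ℕ) :
    ∑ t ∈ Finset.Icc 1 k, (if t ≤ κ then a t else b t)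
      = (∑ t ∈ Finset.Icc 1 (min k κ), a t) + ∑ t ∈ Finset.Icc 1 k, b t
        - ∑ t ∈ Finset.Icc 1 (min k κ), b t := by
  induction k with
  | zero => simp
  | succ k ih =>
    rw [Finset.sum_Icc_succ_top (by omega), Finset.sum_Icc_succ_top (f := b) (by omega), ih]
    by_cases h : k + 1 ≤ κ
    · rw [min_eq_left h, min_eq_left (by omega : k ≤ κ), if_pos h,
        Finset.sum_Icc_succ_top (by omega), Finset.sum_Icc_succ_top (by omega)]
      ring
    · rw [min_eq_right (by omega : κ ≤ k + 1), min_eq_right (by omega : κ ≤ k), if_neg h]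
      ring

lemma tent_lipschitz {u v s l δ : ℝ} (hv : v ∈ Set.Icc (0 : ℝ) 1) (hs : s ∈ Set.Icc (0 : ℝ) 1)
    (hus : |u - s| ≤ δ) (hvl : |v - l| ≤ δ) :
    |(min u v - u * v) - (min s l - s * l)| ≤ 3 * δ := by
  have h1 : |min u v - min s l| ≤ δ :=
    (abs_min_sub_min_le_max u v s l).trans (max_le hus hvl)
  have h2 : |(u - s) * v| ≤ δ := by
    rw [abs_mul, abs_of_nonneg hv.1]
    exact (mul_le_of_le_one_right (abs_nonneg _) hv.2).trans hus
  have h3 : |s * (v - l)| ≤ δ := by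
    rw [abs_mul, abs_of_nonneg hs.1]
    exact (mul_le_of_le_one_left (abs_nonneg _) hs.2).trans hvl
  have h4 : (min u v - u * v) - (min s l - s * l)
      = (min u v - min s l) - (u - s) * v - s * (v - l) := by ring
  rw [h4]
  rw [abs_le] at *
  constructor <;> linarith [h1.1, h1.2, h2.1, h2.2, h3.1, h3.2]

lemma min_sub_mul_nonneg {u v : ℝ} (hu : u ∈ Set.Icc (0 : ℝ) 1) (hv : v ∈ Set.Icc (0 : ℝ) 1) :
    0 ≤ min u v - u * v :=
  sub_nonneg.2 (le_min (mul_le_of_le_one_right hu.1 hv.2) (mul_le_of_le_one_left hv.1 hu.2))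

lemma floor_div_close {n : ℕ} (hn : 0 < n) {s : ℝ} (hs : 0 ≤ s) :
    |(⌊(n : ℝ) * s⌋₊ : ℝ) / n - s| ≤ 1 / n := by
  have hn' : (0 : ℝ) < n := by exact_mod_cast hn
  have h1 := Nat.floor_le (mul_nonneg hn'.le hs)
  have h2 := (Nat.lt_floor_add_one ((n : ℝ) * s)).le
  have h3 : (⌊(n : ℝ) * s⌋₊ : ℝ) / n - s = (⌊(n : ℝ) * s⌋₊ - n * s) / n := by field_simp
  rw [h3, abs_div, abs_of_pos hn']
  gcongr
  rw [abs_le]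
  constructor <;> linarith

lemma floor_mul_le {n : ℕ} {s : ℝ} (hs : s ≤ 1) : ⌊(n : ℝ) * s⌋₊ ≤ n :=
  Nat.floor_le_of_le (mul_le_of_le_one_right (Nat.cast_nonneg n) hs)

/-- If the partial sums of `a` and `b` are linear up to `e n` for indices at most `n`, then the
scaled CUSUM statistic is the tent `|μa - μb| (min u v - u v)` at `u = k / n`, `v = κ / n`,
up to `6 e`. -/
lemma cusum_close (a b : ℕ → ℝ) (μa μb e : ℝ) {n κ k : ℕ} (hn : 0 < n) (hκ : κ ≤ n) (hk : k ≤ n)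
    (hA : ∀ m ≤ n, |(∑ t ∈ Finset.Icc 1 m, a t) - m * μa| ≤ e * n)
    (hB : ∀ m ≤ n, |(∑ t ∈ Finset.Icc 1 m, b t) - m * μb| ≤ e * n) :
    |1 / (n : ℝ) * |(∑ t ∈ Finset.Icc 1 k, (if t ≤ κ then a t else b t))
        - (k : ℝ) / n * ∑ t ∈ Finset.Icc 1 n, (if t ≤ κ then a t else b t)|
      - |μa - μb| * (min ((k : ℝ) / n) ((κ : ℝ) / n) - (k : ℝ) / n * ((κ : ℝ) / n))| ≤ 6 * e := by
  have hn' : (0 : ℝ) < n := by exact_mod_cast hn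
  have hfrac : ∀ j ≤ n, (j : ℝ) / n ∈ Set.Icc (0 : ℝ) 1 := fun j hj =>
    ⟨by positivity, (div_le_one hn').2 (by exact_mod_cast hj)⟩
  have hS : ∀ j ≤ n, |(∑ t ∈ Finset.Icc 1 j, (if t ≤ κ then a t else b t))
      - ((μa - μb) * min (j : ℝ) κ + μb * j)| ≤ 3 * (e * n) := by
    intro j hj
    have h1 := hA (min j κ) (by omega)
    have h2 := hB (min j κ) (by omega)
    have h3 := hB j hj
    rw [sum_two_regime]
    push_cast at h1 h2
    rw [abs_le] at *
    constructor <;> linarith [h1.1, h1.2, h2.1, h2.2, h3.1, h3.2]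
  have hSk := hS k hk
  have hSn := hS n le_rfl
  rw [min_eq_right (by exact_mod_cast hκ : (κ : ℝ) ≤ n)] at hSn
  generalize (∑ t ∈ Finset.Icc 1 k, (if t ≤ κ then a t else b t)) = Sk at *
  generalize (∑ t ∈ Finset.Icc 1 n, (if t ≤ κ then a t else b t)) = Sn at *
  have hu := hfrac k hk
  have hmin := min_sub_mul_nonneg hu (hfrac κ hκ)
  rw [← abs_of_nonneg hmin, ← abs_mul, ← abs_of_pos (one_div_pos.2 hn'), ← abs_mul]
  refine (abs_abs_sub_abs_le _ _).trans ?_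
  have hm : min ((k : ℝ) / n) ((κ : ℝ) / n) = min (k : ℝ) κ / n :=
    min_div_div_right hn'.le _ _
  have key : 1 / (n : ℝ) * (Sk - (k : ℝ) / n * Sn)
      - (μa - μb) * (min ((k : ℝ) / n) ((κ : ℝ) / n) - (k : ℝ) / n * ((κ : ℝ) / n))
      = ((Sk - ((μa - μb) * min (k : ℝ) κ + μb * k))
        - (k : ℝ) / n * (Sn - ((μa - μb) * κ + μb * n))) / n := by
    rw [hm]
    field_simp
    ring
  rw [key, abs_div, abs_of_pos hn', div_le_iff₀ hn']
  refine (abs_sub _ _).trans ?_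
  have h5 : |(k : ℝ) / n * (Sn - ((μa - μb) * κ + μb * n))| ≤ 3 * (e * n) := by
    rw [abs_mul, abs_of_nonneg hu.1]
    exact (mul_le_of_le_one_left (abs_nonneg _) hu.2).trans hSn
  linarith

/-- Two-regime setup: observations follow `(a_t)` up to the change point `k*_n = ⌊nλ⌋`
and `(b_t)` afterwards, with both sequences `[0,M]`-valued and having Cesàro means
converging to `μ_a` and `μ_b` respectively. `D_n(k)` is the CUSUM statistic and `T` the
tent function with height constant `C = |μ_a − μ_b|`. Then
`sup_{0≤s≤1} |(1/n)·D_n(⌊ns⌋) − T(s)| → 0` as `n → ∞`. -/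
theorem cusum_uniform_convergence_to_tent
    (lam M : ℝ) (hlam : lam ∈ Set.Ioo (0 : ℝ) 1) (hM : 0 < M)
    (a b : ℕ → ℝ) (μa μb : ℝ)
    (ha : ∀ t : ℕ, a t ∈ Set.Icc 0 M) (hb : ∀ t : ℕ, b t ∈ Set.Icc 0 M)
    (hma : Tendsto (fun m : ℕ => (1 / (m : ℝ)) * ∑ t ∈ Finset.Icc 1 m, a t)
      atTop (nhds μa))
    (hmb : Tendsto (fun m : ℕ => (1 / (m : ℝ)) * ∑ t ∈ Finset.Icc 1 m, b t)
      atTop (nhds μb))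
    (x : ℕ → ℕ → ℝ)
    (hx : ∀ n t : ℕ, x n t = if t ≤ ⌊(n : ℝ) * lam⌋₊ then a t else b t)
    (D : ℕ → ℕ → ℝ)
    (hD : ∀ n k : ℕ, D n k =
      |(∑ t ∈ Finset.Icc 1 k, x n t) - (k : ℝ) / (n : ℝ) * ∑ t ∈ Finset.Icc 1 n, x n t|)
    (C : ℝ) (hC : C = |μa - μb|)
    (T : ℝ → ℝ)
    (hT : ∀ s : ℝ, T s = if s ≤ lam then C * s * (1 - lam) else C * lam * (1 - s)) :
    Tendsto (fun n : ℕ =>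
        ⨆ s : Set.Icc (0 : ℝ) 1, |(1 / (n : ℝ)) * D n ⌊(n : ℝ) * (s : ℝ)⌋₊ - T s|)
      atTop (nhds 0) := by
  obtain ⟨hl0, hl1⟩ := hlam
  have hC0 : 0 ≤ C := hC ▸ abs_nonneg _
  have hTmin : ∀ s : ℝ, T s = C * (min s lam - s * lam) := by
    intro s
    rw [hT]
    split_ifs with h
    · rw [min_eq_left h]; ring
    · rw [min_eq_right (not_le.1 h).le]; ring
  rw [Metric.tendsto_atTop']
  intro ε hε
  obtain ⟨n₀, hn₀⟩ := exists_nat_ge (12 * C / ε)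
  -- The budget is `6 (ε / 24) + 3 C / n ≤ ε / 4 + ε / 4`.
  obtain ⟨N, hN⟩ := eventually_atTop.1 ((cesaro_uniform a μa hma (ε / 24) (by positivity)).and
    ((cesaro_uniform b μb hmb (ε / 24) (by positivity)).and (eventually_ge_atTop n₀)))
  refine ⟨N, fun n hn => ?_⟩
  obtain ⟨hA, hB, hnn₀⟩ := hN n hn.le
  have hn0 : 0 < n := by omega
  have hn' : (0 : ℝ) < n := by exact_mod_cast hn0
  have hCn : C * (3 * (1 / (n : ℝ))) ≤ ε / 4 := by
    have h1 : (n₀ : ℝ) ≤ n := by exact_mod_cast hnn₀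
    have h2 := (div_le_iff₀ hε).1 (hn₀.trans h1)
    rw [show C * (3 * (1 / (n : ℝ))) = 3 * C / n by ring, div_le_iff₀ hn']
    linarith
  have hsup : (⨆ s : Set.Icc (0 : ℝ) 1,
      |(1 / (n : ℝ)) * D n ⌊(n : ℝ) * (s : ℝ)⌋₊ - T s|) ≤ ε / 2 := by
    refine Real.iSup_le (fun s => ?_) (by positivity)
    obtain ⟨s, hs⟩ := s
    have h1 := cusum_close a b μa μb (ε / 24) hn0 (floor_mul_le (n := n) hl1.le)
      (floor_mul_le (n := n) hs.2) hA hB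
    have h2 := tent_lipschitz (u := (⌊(n : ℝ) * s⌋₊ : ℝ) / n) (v := (⌊(n : ℝ) * lam⌋₊ : ℝ) / n)
      ⟨by positivity, (div_le_one hn').2 (by exact_mod_cast floor_mul_le hl1.le)⟩ hs
      (floor_div_close hn0 hs.1) (floor_div_close hn0 hl0.le)
    have h3 := mul_le_mul_of_nonneg_left h2 hC0
    rw [← abs_of_nonneg hC0, ← abs_mul, abs_of_nonneg hC0, mul_sub] at h3
    simp only [hD, hx, hTmin]
    rw [← hC] at h1
    refine (abs_sub_le _ _ _).trans ((add_le_add h1 h3).trans ?_)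
    linarith
  rw [Real.dist_eq, sub_zero, abs_of_nonneg (Real.iSup_nonneg fun _ => abs_nonneg _)]
  linarith
end

section
/- Under the two-regime setup, the self-normalizer evaluated at the change point is asymptotically negligible on the cubic scale: (1/n³) · V_{n,k*_n}(x^{(n)}) → 0 as n → ∞. -/
/-!
Let `S` be the partial sums of a sequence with Cesàro limit `μ`, and `D m = S m - m μ`. Then
`D m = o(m)`, and even `max_{m ≤ n} |D m| = o(n)` (`partial_sum_deviation_le`). At the change
point each of the two blocks of the self-normalizer sees only one regime, and the linear
drift `m μ` cancels from every summand: a summand of the first block equals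
`D t - (t/k) D k`, and one of the second equals
`D n - D (t-1) - ((n-t+1)/(n-k)) (D n - D k)`. With weights in `[0,1]` these are at most
`2 ε n` and `4 ε n` in absolute value for large `n`, so the at most `n` squares add up to at
most `16 ε² n³`.
-/

open Filter

/-- Pointwise `D m = o(m)` upgraded to a bound uniform in `m ≤ n`: the finitely many initial
deviations are absorbed by `ε n` once `n` is large. -/
lemma partial_sum_deviation_le (a : ℕ → ℝ) (μ : ℝ)
    (h : Tendsto (fun m : ℕ => (1 / (m : ℝ)) * ∑ t ∈ Finset.Icc 1 m, a t) atTop (nhds μ))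
    (ε : ℝ) (hε : 0 < ε) :
    ∃ N : ℕ, ∀ n ≥ N, ∀ m ≤ n, |(∑ t ∈ Finset.Icc 1 m, a t) - m * μ| ≤ ε * n := by
  obtain ⟨N₀, hN₀⟩ := Metric.tendsto_atTop.1 h ε hε
  set C : ℝ := ∑ m ∈ Finset.range (N₀ + 1), |(∑ t ∈ Finset.Icc 1 m, a t) - m * μ| with hC
  obtain ⟨N₁, hN₁⟩ := exists_nat_ge (C / ε)
  refine ⟨N₁, fun n hn m hm => ?_⟩
  have hmn : (m : ℝ) ≤ n := by exact_mod_cast hm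
  rcases lt_or_ge m (N₀ + 1) with hlt | hge
  · have h1 : |(∑ t ∈ Finset.Icc 1 m, a t) - m * μ| ≤ C :=
      Finset.single_le_sum
        (f := fun m : ℕ => |(∑ t ∈ Finset.Icc 1 m, a t) - (m : ℝ) * μ|)
        (fun _ _ => abs_nonneg _) (Finset.mem_range.2 hlt)
    have h2 : (N₁ : ℝ) ≤ n := by exact_mod_cast hn
    have h3 := (div_le_iff₀ hε).1 (hN₁.trans h2)
    linarith
  · have hmpos : (0 : ℝ) < m := by exact_mod_cast (by omega : 0 < m)
    have h1 := hN₀ m (by omega)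
    rw [Real.dist_eq] at h1
    have h2 : (∑ t ∈ Finset.Icc 1 m, a t) - m * μ
        = m * ((1 / (m : ℝ)) * ∑ t ∈ Finset.Icc 1 m, a t - μ) := by
      field_simp
    rw [h2, abs_mul, abs_of_pos hmpos]
    nlinarith

lemma sum_Icc_tail_eq (b : ℕ → ℝ) (s n : ℕ) (h : s ≤ n) :
    ∑ j ∈ Finset.Icc (s + 1) n, b j
      = (∑ j ∈ Finset.Icc 1 n, b j) - ∑ j ∈ Finset.Icc 1 s, b j := by
  induction n, h using Nat.le_induction with
  | base => simp
  | succ n hn ih =>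
    rw [Finset.sum_Icc_succ_top (by omega), Finset.sum_Icc_succ_top (by omega), ih]
    ring

/-- A weighted difference of two quantities bounded by `B`, with weight in `[0,1]`. -/
lemma sq_sub_mul_le (p q r B : ℝ) (hr0 : 0 ≤ r) (hr1 : r ≤ 1) (hp : |p| ≤ B) (hq : |q| ≤ B) :
    (p - r * q) ^ 2 ≤ (2 * B) ^ 2 := by
  have hrq : |r * q| ≤ B := by
    rw [abs_mul, abs_of_nonneg hr0]
    nlinarith [abs_nonneg q]
  exact sq_le_sq' (by linarith [abs_le.1 hp, abs_le.1 hrq])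
    (by linarith [abs_le.1 hp, abs_le.1 hrq])

/-- Two-regime setup: observations follow `(a_t)` up to the change point `k*_n = ⌊nλ⌋`
and `(b_t)` afterwards, with both sequences `[0,M]`-valued and having convergent Cesàro
means. The self-normalizer `V_{n,k}(y)` evaluated at the change point is asymptotically
negligible on the cubic scale: `(1/n³) · V_{n,k*_n}(x^{(n)}) → 0` as `n → ∞`. -/
theorem self_normalizer_at_changepoint_cubic_negligible
    (lam M : ℝ) (hlam : lam ∈ Set.Ioo (0 : ℝ) 1) (hM : 0 < M)
    (a b : ℕ → ℝ) (μa μb : ℝ)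
    (ha : ∀ t : ℕ, a t ∈ Set.Icc 0 M) (hb : ∀ t : ℕ, b t ∈ Set.Icc 0 M)
    (hma : Tendsto (fun m : ℕ => (1 / (m : ℝ)) * ∑ t ∈ Finset.Icc 1 m, a t)
      atTop (nhds μa))
    (hmb : Tendsto (fun m : ℕ => (1 / (m : ℝ)) * ∑ t ∈ Finset.Icc 1 m, b t)
      atTop (nhds μb))
    (x : ℕ → ℕ → ℝ)
    (hx : ∀ n t : ℕ, x n t = if t ≤ ⌊(n : ℝ) * lam⌋₊ then a t else b t)
    (V : ℕ → ℕ → (ℕ → ℝ) → ℝ)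
    (hV : ∀ (n k : ℕ) (y : ℕ → ℝ), V n k y =
      (∑ t ∈ Finset.Icc 1 k,
        ((∑ j ∈ Finset.Icc 1 t, y j) - (t : ℝ) / (k : ℝ) * ∑ j ∈ Finset.Icc 1 k, y j) ^ 2) +
      ∑ t ∈ Finset.Icc (k + 1) n,
        ((∑ j ∈ Finset.Icc t n, y j) -
          ((n : ℝ) - (t : ℝ) + 1) / ((n : ℝ) - (k : ℝ)) * ∑ j ∈ Finset.Icc (k + 1) n, y j) ^ 2) :
    Tendsto (fun n : ℕ => (1 / (n : ℝ) ^ 3) * V n ⌊(n : ℝ) * lam⌋₊ (x n))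
      atTop (nhds 0) := by
  rw [Metric.tendsto_atTop]
  intro η hη
  -- `ε` is chosen so that `16 ε² < η`.
  obtain ⟨ε, hε, hεη⟩ : ∃ ε : ℝ, 0 < ε ∧ 16 * ε ^ 2 < η := by
    refine ⟨√(η / 32), by positivity, ?_⟩
    rw [Real.sq_sqrt (by positivity)]
    linarith
  obtain ⟨Na, hNa⟩ := partial_sum_deviation_le a μa hma ε hε
  obtain ⟨Nb, hNb⟩ := partial_sum_deviation_le b μb hmb ε hε
  refine ⟨max (max Na Nb) 1, fun n hn => ?_⟩
  have hDa := hNa n (by omega)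
  have hDb := hNb n (by omega)
  have hnpos : (0 : ℝ) < n := by exact_mod_cast (by omega : 0 < n)
  set k := ⌊(n : ℝ) * lam⌋₊ with hk
  have hkn : k ≤ n := by
    apply Nat.floor_le_of_le
    nlinarith [hlam.2]
  have hεn : 0 ≤ ε * n := by positivity
  have hfirst : ∀ t ∈ Finset.Icc 1 k,
      ((∑ j ∈ Finset.Icc 1 t, x n j) - (t : ℝ) / (k : ℝ) * ∑ j ∈ Finset.Icc 1 k, x n j) ^ 2
        ≤ 16 * (ε * n) ^ 2 := by
    intro t ht
    rw [Finset.mem_Icc] at ht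
    have hxa : ∀ s ≤ k, ∑ j ∈ Finset.Icc 1 s, x n j = ∑ j ∈ Finset.Icc 1 s, a j := by
      intro s hs
      refine Finset.sum_congr rfl fun j hj => ?_
      rw [Finset.mem_Icc] at hj
      rw [hx, if_pos (by omega)]
    have hkpos : (0 : ℝ) < k := by exact_mod_cast (by omega : 0 < k)
    have htk : (t : ℝ) ≤ k := by exact_mod_cast ht.2
    rw [hxa t ht.2, hxa k le_rfl]
    have hdrift : (∑ j ∈ Finset.Icc 1 t, a j) - (t : ℝ) / k * ∑ j ∈ Finset.Icc 1 k, a j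
        = ((∑ j ∈ Finset.Icc 1 t, a j) - t * μa)
          - (t : ℝ) / k * ((∑ j ∈ Finset.Icc 1 k, a j) - k * μa) := by
      field_simp
      ring
    rw [hdrift]
    have := sq_sub_mul_le _ _ ((t : ℝ) / k) (ε * n) (by positivity)
      ((div_le_one hkpos).2 htk) (hDa t (by omega)) (hDa k hkn)
    nlinarith [sq_nonneg (ε * n)]
  have hsecond : ∀ t ∈ Finset.Icc (k + 1) n,
      ((∑ j ∈ Finset.Icc t n, x n j) -
        ((n : ℝ) - (t : ℝ) + 1) / ((n : ℝ) - (k : ℝ)) * ∑ j ∈ Finset.Icc (k + 1) n, x n j) ^ 2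
        ≤ 16 * (ε * n) ^ 2 := by
    intro t ht
    rw [Finset.mem_Icc] at ht
    have hxb : ∀ s, k ≤ s → s ≤ n → ∑ j ∈ Finset.Icc (s + 1) n, x n j
        = (∑ j ∈ Finset.Icc 1 n, b j) - ∑ j ∈ Finset.Icc 1 s, b j := by
      intro s hs hsn
      rw [← sum_Icc_tail_eq b s n hsn]
      refine Finset.sum_congr rfl fun j hj => ?_
      rw [Finset.mem_Icc] at hj
      rw [hx, if_neg (by omega)]
    obtain ⟨s, rfl⟩ : ∃ s, t = s + 1 := ⟨t - 1, by omega⟩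
    have hnk : (0 : ℝ) < (n : ℝ) - k := sub_pos.2 (by exact_mod_cast (by omega : k < n))
    have hks : (k : ℝ) ≤ s := by exact_mod_cast (by omega : k ≤ s)
    have hsn : (s : ℝ) ≤ n := by exact_mod_cast (by omega : s ≤ n)
    rw [hxb s (by omega) (by omega), hxb k le_rfl hkn]
    push_cast
    have hweight : (n : ℝ) - (s + 1) + 1 = n - s := by ring
    rw [hweight]
    have hdiff : ∀ m ≤ n, |((∑ j ∈ Finset.Icc 1 n, b j) - n * μb)
        - ((∑ j ∈ Finset.Icc 1 m, b j) - m * μb)| ≤ 2 * (ε * n) := by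
      intro m hm
      have h1 := abs_le.1 (hDb n le_rfl)
      have h2 := abs_le.1 (hDb m hm)
      exact abs_le.2 ⟨by linarith, by linarith⟩
    have hdrift : (∑ j ∈ Finset.Icc 1 n, b j) - (∑ j ∈ Finset.Icc 1 s, b j)
          - ((n : ℝ) - s) / (n - k)
            * ((∑ j ∈ Finset.Icc 1 n, b j) - ∑ j ∈ Finset.Icc 1 k, b j)
        = (((∑ j ∈ Finset.Icc 1 n, b j) - n * μb) - ((∑ j ∈ Finset.Icc 1 s, b j) - s * μb))
          - ((n : ℝ) - s) / (n - k)
            * (((∑ j ∈ Finset.Icc 1 n, b j) - n * μb)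
              - ((∑ j ∈ Finset.Icc 1 k, b j) - k * μb)) := by
      have hne := hnk.ne'
      field_simp
      ring
    rw [hdrift]
    have := sq_sub_mul_le _ _ (((n : ℝ) - s) / (n - k)) (2 * (ε * n))
      (div_nonneg (by linarith) hnk.le) ((div_le_one hnk).2 (by linarith))
      (hdiff s (by omega)) (hdiff k hkn)
    nlinarith [sq_nonneg (ε * n)]
  have hV0 : 0 ≤ V n k (x n) := by
    rw [hV]
    positivity
  have hVle : V n k (x n) ≤ 16 * ε ^ 2 * (n : ℝ) ^ 3 := by
    rw [hV]
    have h1 := Finset.sum_le_card_nsmul _ _ _ hfirst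
    have h2 := Finset.sum_le_card_nsmul _ _ _ hsecond
    simp only [Nat.card_Icc, nsmul_eq_mul] at h1 h2
    have e1 : ((k + 1 - 1 : ℕ) : ℝ) = k := by simp
    have e2 : ((n + 1 - (k + 1) : ℕ) : ℝ) = n - k := by
      rw [Nat.add_sub_add_right, Nat.cast_sub hkn]
    rw [e1] at h1
    rw [e2] at h2
    refine (add_le_add h1 h2).trans (le_of_eq ?_)
    ring
  have hn3 : (0 : ℝ) < (n : ℝ) ^ 3 := by positivity
  rw [Real.dist_eq, sub_zero, abs_of_nonneg (by positivity), one_div_mul_eq_div]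
  exact ((div_le_iff₀ hn3).2 hVle).trans_lt hεη
end

section
/- Under the two-regime setup with C = |μ_a − μ_b| > 0, the self-normalized statistic at the change point diverges: for every B > 0 there exists N such that for all n ≥ N, (1/n)·D_n(k*_n)² ≥ B · (1/n²)·V_{n,k*_n}(x^{(n)}). -/
/-!
Write `A m = ∑_{t ≤ m} a t - m μa` and `E m = ∑_{t ≤ m} b t - m μb`. Convergence of the Cesàro
means upgrades to a uniform bound: for each `ε > 0` and all large `n`, `|A m|` and `|E m|` are at
most `ε n` for every `m ≤ n` (`abs_centered_sum_le`). At the true change point `k`, each of the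
two blocks in the self-normalizer comes from a single regime, so the means cancel and every
summand is the square of a combination of values of `A` or of `E`, of size at most `4 ε n`; hence
`V ≤ 16 ε² n³`. On the other hand
`D = |k (n - k) / n * (μa - μb) + (1 - k / n) A k - (k / n) (E n - E k)|`,
where the first term is at least `c n` in absolute value, with `c = λ (1 - λ) |μa - μb| / 2`,
and the others are at most `3 ε n`. Taking `ε = c / (8 (1 + B))` makes
`D² / n ≥ c² n / 4 ≥ B V / n²`.
-/

open Filter

/-- The Cesàro error is `o(n)` uniformly over all `m ≤ n`: large `m` are handled by the
convergence, and the finitely many small ones by a constant that `ε n` eventually exceeds. -/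
lemma abs_centered_sum_le (a : ℕ → ℝ) (μ : ℝ)
    (h : Tendsto (fun m : ℕ => (1 / (m : ℝ)) * ∑ t ∈ Finset.Icc 1 m, a t) atTop (nhds μ))
    (ε : ℝ) (hε : 0 < ε) :
    ∃ N : ℕ, ∀ n : ℕ, N ≤ n → ∀ m ≤ n,
      |(∑ t ∈ Finset.Icc 1 m, a t) - m * μ| ≤ ε * n := by
  obtain ⟨N₀, hN₀⟩ := Metric.tendsto_atTop.1 h ε hε
  set K : ℝ := ∑ i ∈ Finset.range (N₀ + 1), |(∑ t ∈ Finset.Icc 1 i, a t) - i * μ| with hK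
  obtain ⟨N₁, hN₁⟩ := exists_nat_ge (K / ε)
  refine ⟨N₁, fun n hn m hm => ?_⟩
  have hn' : (N₁ : ℝ) ≤ n := by exact_mod_cast hn
  have hm' : (m : ℝ) ≤ n := by exact_mod_cast hm
  rcases Nat.lt_or_ge m (N₀ + 1) with hlt | hge
  · have h1 : |(∑ t ∈ Finset.Icc 1 m, a t) - m * μ| ≤ K :=
      Finset.single_le_sum (f := fun i : ℕ => |(∑ t ∈ Finset.Icc 1 i, a t) - i * μ|)
        (fun i _ => abs_nonneg _) (Finset.mem_range.2 hlt)
    have h2 : K ≤ N₁ * ε := (div_le_iff₀ hε).1 hN₁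
    nlinarith
  · have h1 := hN₀ m (by omega)
    rw [Real.dist_eq] at h1
    have hmpos : (0 : ℝ) < m := by exact_mod_cast (by omega : 0 < m)
    have h2 : (∑ t ∈ Finset.Icc 1 m, a t) - m * μ
        = m * ((1 / (m : ℝ)) * ∑ t ∈ Finset.Icc 1 m, a t - μ) := by
      field_simp
    rw [h2, abs_mul, abs_of_pos hmpos]
    nlinarith

/-- A weight in `[0, 1]` does not increase the size of a quantity. -/
lemma abs_weight_mul_le {r y e : ℝ} (h0 : 0 ≤ r) (h1 : r ≤ 1) (hy : |y| ≤ e) :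
    |r * y| ≤ e := by
  rw [abs_mul, abs_of_nonneg h0]
  nlinarith [abs_nonneg y]

lemma sum_Icc_split (f : ℕ → ℝ) (k n : ℕ) (h : k ≤ n) :
    ∑ j ∈ Finset.Icc 1 k, f j + ∑ j ∈ Finset.Icc (k + 1) n, f j = ∑ j ∈ Finset.Icc 1 n, f j := by
  have e : ∀ p q : ℕ, Finset.Icc (p + 1) q = Finset.Ioc p q := fun p q => by
    ext; simp
  have e0 : ∀ q : ℕ, Finset.Icc 1 q = Finset.Ioc 0 q := e 0
  rw [e0, e0, e]
  exact Finset.sum_Ioc_consecutive f (Nat.zero_le k) h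

/-- Two-regime setup: observations follow `(a_t)` up to the change point `k*_n = ⌊nλ⌋`
and `(b_t)` afterwards, with both sequences `[0,M]`-valued, convergent Cesàro means, and
`C = |μ_a − μ_b| > 0`. Then the self-normalized statistic at the change point diverges:
for every `B > 0` there exists `N` such that for all `n ≥ N`,
`(1/n)·D_n(k*_n)² ≥ B · (1/n²)·V_{n,k*_n}(x^{(n)})`. -/
theorem self_normalized_statistic_diverges_at_changepoint
    (lam M : ℝ) (hlam : lam ∈ Set.Ioo (0 : ℝ) 1) (hM : 0 < M)
    (a b : ℕ → ℝ) (μa μb : ℝ)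
    (ha : ∀ t : ℕ, a t ∈ Set.Icc 0 M) (hb : ∀ t : ℕ, b t ∈ Set.Icc 0 M)
    (hma : Tendsto (fun m : ℕ => (1 / (m : ℝ)) * ∑ t ∈ Finset.Icc 1 m, a t)
      atTop (nhds μa))
    (hmb : Tendsto (fun m : ℕ => (1 / (m : ℝ)) * ∑ t ∈ Finset.Icc 1 m, b t)
      atTop (nhds μb))
    (x : ℕ → ℕ → ℝ)
    (hx : ∀ n t : ℕ, x n t = if t ≤ ⌊(n : ℝ) * lam⌋₊ then a t else b t)
    (D : ℕ → ℕ → ℝ)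
    (hD : ∀ n k : ℕ, D n k =
      |(∑ t ∈ Finset.Icc 1 k, x n t) - (k : ℝ) / (n : ℝ) * ∑ t ∈ Finset.Icc 1 n, x n t|)
    (hCpos : 0 < |μa - μb|)
    (V : ℕ → ℕ → (ℕ → ℝ) → ℝ)
    (hV : ∀ (n k : ℕ) (y : ℕ → ℝ), V n k y =
      (∑ t ∈ Finset.Icc 1 k,
        ((∑ j ∈ Finset.Icc 1 t, y j) - (t : ℝ) / (k : ℝ) * ∑ j ∈ Finset.Icc 1 k, y j) ^ 2) +
      ∑ t ∈ Finset.Icc (k + 1) n,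
        ((∑ j ∈ Finset.Icc t n, y j) -
          ((n : ℝ) - (t : ℝ) + 1) / ((n : ℝ) - (k : ℝ)) * ∑ j ∈ Finset.Icc (k + 1) n, y j) ^ 2) :
    ∀ B : ℝ, 0 < B → ∃ N : ℕ, ∀ n : ℕ, N ≤ n →
      B * ((1 / (n : ℝ) ^ 2) * V n ⌊(n : ℝ) * lam⌋₊ (x n))
        ≤ (1 / (n : ℝ)) * (D n ⌊(n : ℝ) * lam⌋₊) ^ 2 := by
  intro B hB
  obtain ⟨hl0, hl1⟩ := hlam
  set C := |μa - μb| with hC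
  set c := lam * (1 - lam) * C / 2 with hc
  have hcpos : 0 < c := by
    have : 0 < 1 - lam := by linarith
    positivity
  set ε := c / (8 * (1 + B)) with hε
  have hεpos : 0 < ε := by positivity
  have hεc : ε * (8 * (1 + B)) = c := by
    rw [hε]; field_simp
  obtain ⟨N₁, hN₁⟩ := abs_centered_sum_le a μa hma ε hεpos
  obtain ⟨N₂, hN₂⟩ := abs_centered_sum_le b μb hmb ε hεpos
  obtain ⟨N₃, hN₃⟩ := exists_nat_ge (2 / lam)
  refine ⟨N₁ + N₂ + N₃ + 1, fun n hn => ?_⟩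
  have hA := hN₁ n (by omega)
  have hE := hN₂ n (by omega)
  have hnpos : (0 : ℝ) < n := by exact_mod_cast (by omega : 0 < n)
  have hn3 : 2 ≤ (n : ℝ) * lam := by
    have h1 : (N₃ : ℝ) ≤ n := by exact_mod_cast (by omega : N₃ ≤ n)
    have h2 : 2 ≤ (N₃ : ℝ) * lam := (div_le_iff₀ hl0).1 hN₃
    nlinarith
  have hkle : (⌊(n : ℝ) * lam⌋₊ : ℝ) ≤ n * lam := Nat.floor_le (by positivity)
  have hkgt : (n : ℝ) * lam < ⌊(n : ℝ) * lam⌋₊ + 1 := Nat.lt_floor_add_one _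
  have hxa : ∀ t ≤ ⌊(n : ℝ) * lam⌋₊, x n t = a t := fun t ht => by rw [hx, if_pos ht]
  have hxb : ∀ t, ⌊(n : ℝ) * lam⌋₊ < t → x n t = b t := fun t ht => by
    rw [hx, if_neg (by omega)]
  generalize ⌊(n : ℝ) * lam⌋₊ = k at *
  have hnl : (n : ℝ) * lam < n := mul_lt_of_lt_one_right hnpos hl1
  have hkn' : (k : ℝ) < n := hkle.trans_lt hnl
  have hkn : k < n := by exact_mod_cast hkn'
  have hkpos : (0 : ℝ) < k := by linarith
  set A : ℕ → ℝ := fun m => (∑ t ∈ Finset.Icc 1 m, a t) - m * μa with hAdef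
  set E : ℕ → ℝ := fun m => (∑ t ∈ Finset.Icc 1 m, b t) - m * μb with hEdef
  have hA' : ∀ m ≤ n, |A m| ≤ ε * n := hA
  have hE' : ∀ m ≤ n, |E m| ≤ ε * n := hE
  -- Within each regime, the block sums of `x n` are mean part plus Cesàro error.
  have hSa : ∀ t ≤ k, ∑ j ∈ Finset.Icc 1 t, x n j = t * μa + A t := fun t ht => by
    rw [Finset.sum_congr rfl fun j hj => hxa j ((Finset.mem_Icc.1 hj).2.trans ht)]
    simp only [hAdef]; ring
  have hSb : ∀ s, k ≤ s → s ≤ n →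
      ∑ j ∈ Finset.Icc (s + 1) n, x n j = ((n : ℝ) - s) * μb + (E n - E s) := fun s hs hsn => by
    rw [Finset.sum_congr rfl fun j hj => hxb j (by have := (Finset.mem_Icc.1 hj).1; omega)]
    have := sum_Icc_split b s n hsn
    simp only [hEdef]; linarith
  have hSk := hSa k le_rfl
  have hSn := hSb k le_rfl hkn.le
  have hVle : V n k (x n) ≤ n * (4 * (ε * n)) ^ 2 := by
    rw [hV]
    have h1 : ∀ t ∈ Finset.Icc 1 k, ((∑ j ∈ Finset.Icc 1 t, x n j)
        - (t : ℝ) / (k : ℝ) * ∑ j ∈ Finset.Icc 1 k, x n j) ^ 2 ≤ (4 * (ε * n)) ^ 2 := by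
      intro t ht
      have htk := (Finset.mem_Icc.1 ht).2
      have htk' : (t : ℝ) ≤ k := by exact_mod_cast htk
      rw [hSa t htk, hSk]
      have e : (t : ℝ) * μa + A t - (t : ℝ) / k * (k * μa + A k) = A t - (t : ℝ) / k * A k := by
        field_simp; ring
      rw [e]
      have h1 := abs_le.1 (hA' t (by omega))
      have h2 := abs_le.1 (abs_weight_mul_le (r := (t : ℝ) / k) (by positivity)
        ((div_le_one hkpos).2 htk') (hA' k hkn.le))
      apply sq_le_sq'
      · linarith
      · linarith
    have h2 : ∀ t ∈ Finset.Icc (k + 1) n, ((∑ j ∈ Finset.Icc t n, x n j) -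
          ((n : ℝ) - (t : ℝ) + 1) / ((n : ℝ) - (k : ℝ)) * ∑ j ∈ Finset.Icc (k + 1) n, x n j) ^ 2
          ≤ (4 * (ε * n)) ^ 2 := by
      intro t ht
      obtain ⟨ht1, ht2⟩ := Finset.mem_Icc.1 ht
      obtain ⟨s, rfl⟩ : ∃ s, t = s + 1 := ⟨t - 1, by omega⟩
      have hks : (k : ℝ) ≤ s := by exact_mod_cast (by omega : k ≤ s)
      have hsn : (s : ℝ) ≤ n := by exact_mod_cast (by omega : s ≤ n)
      rw [hSb s (by omega) (by omega), hSn]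
      have hd : (0 : ℝ) < n - k := by linarith
      have e : ((n : ℝ) - s) * μb + (E n - E s) - ((n : ℝ) - ((s + 1 : ℕ) : ℝ) + 1) / (n - k)
          * (((n : ℝ) - k) * μb + (E n - E k))
          = (E n - E s) - ((n : ℝ) - s) / (n - k) * (E n - E k) := by
        push_cast; field_simp; ring
      rw [e]
      have h1 := abs_le.1 (hE' n le_rfl)
      have h2 := abs_le.1 (hE' s (by omega))
      have h3 := abs_le.1 (hE' k hkn.le)
      have h4 := abs_le.1 (abs_weight_mul_le (r := ((n : ℝ) - s) / (n - k)) (y := E n - E k)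
        (e := 2 * (ε * n)) (div_nonneg (by linarith) hd.le)
        ((div_le_one hd).2 (by linarith)) (abs_le.2 ⟨by linarith, by linarith⟩))
      apply sq_le_sq'
      · linarith
      · linarith
    have h3 := Finset.sum_le_card_nsmul _ _ _ h1
    have h4 := Finset.sum_le_card_nsmul _ _ _ h2
    rw [Nat.card_Icc, nsmul_eq_mul] at h3 h4
    have e1 : ((k + 1 - 1 : ℕ) : ℝ) = k := by simp
    have e2 : ((n + 1 - (k + 1) : ℕ) : ℝ) = n - k := by
      rw [Nat.add_sub_add_right, Nat.cast_sub hkn.le]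
    rw [e1] at h3
    rw [e2] at h4
    linarith
  have hDge : c / 2 * n ≤ D n k := by
    rw [hD, ← sum_Icc_split (x n) k n hkn.le, hSk, hSn]
    have e : (k : ℝ) * μa + A k - (k : ℝ) / n * (k * μa + A k + (((n : ℝ) - k) * μb + (E n - E k)))
        = (k : ℝ) * (n - k) / n * (μa - μb)
          - ((k : ℝ) / n * (E n - E k) - ((n : ℝ) - k) / n * A k) := by
      field_simp; ring
    rw [e]
    have h1 := abs_le.1 (hE' n le_rfl)
    have h3 := abs_le.1 (hE' k hkn.le)
    have h4 := abs_le.1 (abs_weight_mul_le (r := (k : ℝ) / n) (y := E n - E k)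
        (e := 2 * (ε * n)) (by positivity)
        ((div_le_one hnpos).2 hkn'.le) (abs_le.2 ⟨by linarith, by linarith⟩))
    have h5 := abs_le.1 (abs_weight_mul_le (r := ((n : ℝ) - k) / n)
        (div_nonneg (by linarith) hnpos.le)
        ((div_le_one hnpos).2 (by linarith)) (hA' k hkn.le))
    have h6 : |(k : ℝ) / n * (E n - E k) - ((n : ℝ) - k) / n * A k| ≤ 3 * (ε * n) :=
      abs_le.2 ⟨by linarith, by linarith⟩
    have h7 := abs_sub_abs_le_abs_sub ((k : ℝ) * (n - k) / n * (μa - μb))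
      ((k : ℝ) / n * (E n - E k) - ((n : ℝ) - k) / n * A k)
    have hw : 0 ≤ (k : ℝ) * (n - k) / n :=
      div_nonneg (mul_nonneg hkpos.le (by linarith)) hnpos.le
    rw [abs_mul, abs_of_nonneg hw, ← hC] at h7
    -- `k ≥ n λ / 2` because `n λ ≥ 2`, and `n - k ≥ n (1 - λ)`.
    have h8 : lam * (1 - lam) / 2 * n ≤ (k : ℝ) * (n - k) / n := by
      rw [le_div_iff₀ hnpos]
      have := mul_le_mul (by linarith : (n : ℝ) * lam / 2 ≤ k)
        (by linarith : (n : ℝ) - n * lam ≤ n - k) (by linarith) hkpos.le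
      linarith
    have h9 : c * n ≤ (k : ℝ) * (n - k) / n * C := by
      have := mul_le_mul_of_nonneg_right h8 hCpos.le
      rw [hc]; linarith
    have h10 : 8 * ε ≤ c := by linarith [mul_pos hεpos hB]
    have h11 := mul_le_mul_of_nonneg_right h10 hnpos.le
    have h12 := mul_pos hcpos hnpos
    linarith
  calc B * ((1 / (n : ℝ) ^ 2) * V n k (x n))
      ≤ B * ((1 / (n : ℝ) ^ 2) * (n * (4 * (ε * n)) ^ 2)) := by gcongr
    _ = 16 * B * ε ^ 2 * n := by field_simp; ring
    _ ≤ (c / 2) ^ 2 * n := by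
        gcongr
        rw [← hεc]
        nlinarith [mul_pos (sq_pos_of_pos hεpos) hB, sq_nonneg (ε * B), sq_nonneg ε]
    _ = (1 / (n : ℝ)) * (c / 2 * n) ^ 2 := by field_simp
    _ ≤ (1 / (n : ℝ)) * (D n k) ^ 2 := by gcongr
end
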